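/- In any triangle in ℝ^d whose largest angle is less than π/3 + c where 0 < c < 0.024, the ratio of the smallest side to the largest side exceeds sin(π/3 - 2c)/sin(π/3 + c), which is at least 1 - 1.744c. -/

import Mathlib

/-- Three positive quantities proportional to numbers in `(s, t)` have min-max ratio above `s / t`. -/
theorem div_lt_min_div_max_of_proportional {s t k x y z p q r : ℝ} (hs : 0 < s) (hk : 0 < k)
    (hx : x = k * p) (hy : y = k * q) (hz : z = k * r)
    (hp : s < p ∧ p < t) (hq : s < q ∧ q < t) (hr : s < r ∧ r < t) :
    s / t < min x (min y z) / max x (max y z) := by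
  have ht : 0 < t := hs.trans (hp.1.trans hp.2)
  have hmin : k * s < min x (min y z) := by
    rw [hx, hy, hz]
    exact lt_min (by gcongr; exact hp.1) (lt_min (by gcongr; exact hq.1) (by gcongr; exact hr.1))
  have hmax : max x (max y z) < k * t := by
    rw [hx, hy, hz]
    exact max_lt (by gcongr; exact hp.2) (max_lt (by gcongr; exact hq.2) (by gcongr; exact hr.2))
  have hpos : 0 < max x (max y z) :=
    lt_of_lt_of_le (hx ▸ mul_pos hk (hs.trans hp.1)) (le_max_left _ _)
  rw [div_lt_div_iff₀ ht hpos]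
  calc s * max x (max y z) < s * (k * t) := by gcongr
    _ = k * s * t := by ring
    _ < min x (min y z) * t := by gcongr

theorem one_sub_mul_le_sin_div_sin {c : ℝ} (hc : 0 < c) (hc' : c < 0.024) :
    1 - 1.744 * c ≤ Real.sin (Real.pi / 3 - 2 * c) / Real.sin (Real.pi / 3 + c) := by
  have hpos : 0 < Real.sin (Real.pi / 3 + c) :=
    Real.sin_pos_of_pos_of_lt_pi (by linarith [Real.pi_pos])
      (by norm_num at hc'; linarith [Real.pi_gt_three])
  rw [le_div_iff₀ hpos, Real.sin_sub, Real.sin_add, Real.sin_pi_div_three, Real.cos_pi_div_three]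
  have h3 : (1.73205 : ℝ) < √3 := Real.lt_sqrt_of_sq_lt (by norm_num)
  norm_num at hc' h3 ⊢
  have hsc := Real.sin_bound (x := c) (by rw [abs_of_pos hc]; linarith)
  have hcc := Real.cos_bound (x := c) (by rw [abs_of_pos hc]; linarith)
  have hs2 := Real.sin_bound (x := 2 * c) (by rw [abs_of_pos (by linarith)]; linarith)
  have hc2 := Real.one_sub_sq_div_two_le_cos (x := 2 * c)
  rw [abs_of_pos (by linarith : 0 < 2 * c), abs_le] at hs2
  rw [abs_of_pos hc, abs_le] at hsc hcc
  have hcos : 1.744 * c - 3 / 2 * c ^ 2 - 0.872 * c ^ 3 - c ^ 4 * (5 / 96) ≤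
      Real.cos (2 * c) - (1 - 1.744 * c) * Real.cos c := by
    have : (1 - 1.744 * c) * Real.cos c ≤ (1 - 1.744 * c) * (1 - c ^ 2 / 2 + c ^ 4 * (5 / 96)) := by
      gcongr
      · norm_num; linarith
      · linarith
    norm_num at this ⊢
    nlinarith
  have hsin : (1 - 1.744 * c) * Real.sin c ≤
      (1 - 1.744 * c) * (c - c ^ 3 / 6 + c ^ 5 / 100) := by
    gcongr
    · norm_num; linarith
    · linarith
  have hpoly : 0 ≤ 1.744 * c - 3 / 2 * c ^ 2 - 0.872 * c ^ 3 - c ^ 4 * (5 / 96) := by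
    have : 0 ≤ c * (1.744 - 3 / 2 * c - 0.872 * c ^ 2 - c ^ 3 * (5 / 96)) := by
      have h2 : c ^ 2 ≤ 0.024 ^ 2 := by gcongr; norm_num; linarith
      have h3 : c ^ 3 ≤ 0.024 ^ 3 := by gcongr; norm_num; linarith
      norm_num at h2 h3 ⊢
      exact mul_nonneg hc.le (by linarith)
    linarith
  have hsqrt := mul_le_mul_of_nonneg_right h3.le hpoly
  have hsqrt' := mul_le_mul_of_nonneg_left hcos (Real.sqrt_nonneg 3)
  have hfinal : 0 ≤ c * (1.73205 * (1.744 - 3 / 2 * c - 0.872 * c ^ 2 - c ^ 3 * (5 / 96)) -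
      (2 - 4 / 3 * c ^ 2 + 8 / 25 * c ^ 4) -
      (1 - 1.744 * c) * (1 - c ^ 2 / 6 + c ^ 4 / 100)) := by
    have h2 : 0 < c ^ 2 := by positivity
    have h3 : c ^ 3 ≤ c ^ 2 * 0.024 := by
      norm_num; nlinarith
    have h4 : c ^ 4 ≤ c ^ 2 * 0.024 ^ 2 := by
      norm_num; nlinarith
    apply mul_nonneg hc.le
    norm_num at h3 h4 ⊢
    nlinarith
  norm_num at hsqrt hsqrt' hsin hfinal ⊢
  nlinarith

theorem stmt11 (d : ℕ) (A B C : EuclideanSpace ℝ (Fin d))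
    (hnd : ¬ Collinear ℝ ({A, B, C} : Set (EuclideanSpace ℝ (Fin d))))
    (c : ℝ) (hc : 0 < c) (hc' : c < 0.024)
    (hA : EuclideanGeometry.angle B A C < Real.pi / 3 + c)
    (hB : EuclideanGeometry.angle A B C < Real.pi / 3 + c)
    (hC : EuclideanGeometry.angle A C B < Real.pi / 3 + c) :
    min (dist A B) (min (dist B C) (dist A C)) / max (dist A B) (max (dist B C) (dist A C)) >
        Real.sin (Real.pi / 3 - 2 * c) / Real.sin (Real.pi / 3 + c) ∧
      Real.sin (Real.pi / 3 - 2 * c) / Real.sin (Real.pi / 3 + c) ≥ 1 - 1.744 * c := by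
  refine ⟨?_, one_sub_mul_le_sin_div_sin hc hc'⟩
  have hsum := EuclideanGeometry.angle_add_angle_add_angle_eq_pi C (ne₁₂_of_not_collinear hnd).symm
  rw [EuclideanGeometry.angle_comm B C A, EuclideanGeometry.angle_comm C A B] at hsum
  have hsinC : 0 < Real.sin (EuclideanGeometry.angle A C B) :=
    EuclideanGeometry.sin_pos_of_not_collinear (by rwa [Set.pair_comm C B])
  have hAB : 0 < dist A B := dist_pos.mpr (ne₁₂_of_not_collinear hnd)
  have hlawA := EuclideanGeometry.law_sin A C B
  rw [dist_comm C B, dist_comm B A] at hlawA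
  have hlawB := EuclideanGeometry.law_sin B C A
  rw [dist_comm C A, EuclideanGeometry.angle_comm B C A] at hlawB
  have hsin : ∀ θ, Real.pi / 3 - 2 * c < θ → θ < Real.pi / 3 + c →
      Real.sin (Real.pi / 3 - 2 * c) < Real.sin θ ∧ Real.sin θ < Real.sin (Real.pi / 3 + c) := by
    norm_num at hc'
    have := Real.pi_gt_three
    exact fun θ h₁ h₂ => ⟨Real.sin_lt_sin_of_lt_of_le_pi_div_two (by linarith) (by linarith) h₁,
      Real.sin_lt_sin_of_lt_of_le_pi_div_two (by linarith) (by linarith) h₂⟩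
  have hs : 0 < Real.sin (Real.pi / 3 - 2 * c) := by
    norm_num at hc'
    have := Real.pi_gt_three
    exact Real.sin_pos_of_pos_of_lt_pi (by linarith) (by linarith)
  refine div_lt_min_div_max_of_proportional hs (div_pos hAB hsinC)
    (div_mul_cancel₀ _ hsinC.ne').symm ?_ ?_
    (hsin _ (by linarith) hC) (hsin _ (by linarith) hA) (hsin _ (by linarith) hB)
  · field_simp
    linarith
  · field_simp
    linarith
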